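/- Let f : ℝ⁴ → ℂ be a smooth KT-periodic function and let k, m, n ∈ ℤ with n ≠ 0. Then the function f_{k,m,n} : ℝ → ℂ defined by f_{k,m,n}(x) = ∫_0^1 ∫_0^1 ∫_0^1 f(t,x,y,z)·e^{−2πi(kt + my + nz)} dt dy dz is a Schwartz function on ℝ. -/

import Mathlib

/-!
Integrating out `t` and `z` against `e^{−2πi(kt + nz)}` turns `f` into a smooth function `u` of
`(x, y)` with `u(x, y + 1) = u(x, y)` and `u(x + 1, y) = e^{−2πiny} u(x, y)`, and `f_{k,m,n}` is
the `m`-th Fourier coefficient `c_m` of `u` in `y`. Since `u` is smooth, `c_m(x)` decays faster than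
any power of `m`, uniformly for `x` in a compact set. The second relation says
`c_m(x + 1) = c_{m+n}(x)`, so as `n ≠ 0` decay in `m` over `[0, 1]` is the same as decay in `x` over
the whole line. The derivatives of `c_m` are coefficients of `∂u/∂x, ∂²u/∂x², …`, which satisfy the
same two relations.
-/

open Complex MeasureTheory

noncomputable section

/-- Functions of four real variables `(t, x, y, z)` with complex values. -/
abbrev F4 : Type := ℝ → ℝ → ℝ → ℝ → ℂ

/-- Smoothness of a function of four real variables. -/
def Smooth4 (f : F4) : Prop :=
  ContDiff ℝ (⊤ : ℕ∞) (fun p : ℝ × ℝ × ℝ × ℝ => f p.1 p.2.1 p.2.2.1 p.2.2.2)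

/-- The invariance properties identifying smooth functions on `ℝ⁴` with smooth
functions on the Kodaira–Thurston manifold `KT⁴`. -/
def KTPeriodic (f : F4) : Prop :=
  ∀ t x y z : ℝ,
    f (t + 1) x y z = f t x y z ∧
    f t (x + 1) y (z + y) = f t x y z ∧
    f t x (y + 1) z = f t x y z ∧
    f t x y (z + 1) = f t x y z

/-- Partial derivative in `t`. -/
def pT (f : F4) (t x y z : ℝ) : ℂ := deriv (fun s => f s x y z) t
/-- Partial derivative in `x`. -/
def pX (f : F4) (t x y z : ℝ) : ℂ := deriv (fun s => f t s y z) x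
/-- Partial derivative in `y`. -/
def pY (f : F4) (t x y z : ℝ) : ℂ := deriv (fun s => f t x s z) y
/-- Partial derivative in `z`. -/
def pZ (f : F4) (t x y z : ℝ) : ℂ := deriv (fun s => f t x y s) z

/-- The vector field `V₁ = (1/2)(∂/∂t − i ∂/∂x)`. -/
def V₁ (f : F4) (t x y z : ℝ) : ℂ :=
  (1 / 2) * (pT f t x y z - Complex.I * pX f t x y z)

/-- The conjugate vector field `V̄₁ = (1/2)(∂/∂t + i ∂/∂x)`. -/
def V₁c (f : F4) (t x y z : ℝ) : ℂ :=
  (1 / 2) * (pT f t x y z + Complex.I * pX f t x y z)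

/-- The vector field `V₂ = (1/2)(∂/∂y + x ∂/∂z − ((a−i)/b) ∂/∂z)`. -/
def V₂ (a b : ℝ) (f : F4) (t x y z : ℝ) : ℂ :=
  (1 / 2) * (pY f t x y z + (x : ℂ) * pZ f t x y z -
    (((a : ℂ) - Complex.I) / (b : ℂ)) * pZ f t x y z)

/-- The conjugate vector field `V̄₂ = (1/2)(∂/∂y + x ∂/∂z − ((a+i)/b) ∂/∂z)`. -/
def V₂c (a b : ℝ) (f : F4) (t x y z : ℝ) : ℂ :=
  (1 / 2) * (pY f t x y z + (x : ℂ) * pZ f t x y z -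
    (((a : ℂ) + Complex.I) / (b : ℂ)) * pZ f t x y z)

/-- The space `𝒮(a,b)` of pairs `(f,g)` of smooth KT-periodic functions satisfying
`−V̄₂(f) + V̄₁(g) + (b/4)g = 0` and `V₁(f) + V₂(g) = 0`. -/
def Sol (a b : ℝ) : Set (F4 × F4) :=
  {fg | Smooth4 fg.1 ∧ Smooth4 fg.2 ∧ KTPeriodic fg.1 ∧ KTPeriodic fg.2 ∧
    (∀ t x y z : ℝ,
      -V₂c a b fg.1 t x y z + V₁c fg.2 t x y z + ((b : ℂ) / 4) * fg.2 t x y z = 0) ∧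
    (∀ t x y z : ℝ, V₁ fg.1 t x y z + V₂ a b fg.2 t x y z = 0)}

/-- `S` is a `ℂ`-subspace of dimension exactly `n`: there are `n` linearly independent
elements whose span is exactly `S`. -/
def HasDimOver {V : Type*} [AddCommGroup V] [Module ℂ V] (S : Set V) (n : ℕ) : Prop :=
  ∃ v : Fin n → V, LinearIndependent ℂ v ∧
    (Submodule.span ℂ (Set.range v) : Set V) = S

end

open Set Topology
open scoped ContDiff FourierTransform

/-! ### Smooth functions depending on a parameter -/

section Parametric

variable {E F : Type*} [NormedAddCommGroup E] [NormedSpace ℝ E]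
  [NormedAddCommGroup F] [NormedSpace ℝ F]

theorem hasFDerivAt_intervalIntegral_of_contDiff {f : E → ℝ → F} (hf : ContDiff ℝ 1 ↿f)
    (a b : ℝ) (x : E) :
    HasFDerivAt (fun x => ∫ s in a..b, f x s) (∫ s in a..b, fderiv ℝ (f · s) x) x := by
  have hf' : Continuous fun p : E × ℝ => fderiv ℝ (f · p.2) p.1 :=
    Continuous.fderiv_one (f := fun (p : E × ℝ) x => f x p.2)
      (hf.comp (contDiff_snd.prodMk (contDiff_snd.comp contDiff_fst))) continuous_fst
  have hf'x : Continuous fun s => fderiv ℝ (f · s) x := hf'.comp (Continuous.prodMk_right x)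
  have hfx : ∀ x, Continuous (f x) := fun x => hf.continuous.comp (Continuous.prodMk_right x)
  obtain ⟨C, hC⟩ := isCompact_uIcc.exists_bound_of_continuousOn (s := uIcc a b) hf'x.continuousOn
  have hbound : ∀ᶠ x' in 𝓝 x, ∀ s ∈ uIcc a b, ‖fderiv ℝ (f · s) x'‖ < C + 1 :=
    isCompact_uIcc.eventually_forall_of_forall_eventually fun s hs =>
      hf'.norm.continuousAt.eventually_lt_const ((hC s hs).trans_lt (lt_add_one C))
  refine intervalIntegral.hasFDerivAt_integral_of_dominated_of_fderiv_le
    (F := f) (F' := fun x s => fderiv ℝ (f · s) x) (bound := fun _ => C + 1)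
    hbound (.of_forall fun x => (hfx x).aestronglyMeasurable) ((hfx x).intervalIntegrable a b)
    hf'x.aestronglyMeasurable
    (.of_forall fun s hs x' hx' => (hx' s (uIoc_subset_uIcc hs)).le)
    intervalIntegrable_const (.of_forall fun s _ x' _ => ?_)
  exact ((hf.comp (contDiff_prodMk_left s)).differentiable one_ne_zero x').hasFDerivAt

theorem hasDerivAt_intervalIntegral_of_contDiff {f : ℝ → ℝ → F} (hf : ContDiff ℝ 1 ↿f)
    (a b x : ℝ) :
    HasDerivAt (fun x => ∫ s in a..b, f x s) (∫ s in a..b, deriv (f · s) x) x := by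
  have hf' : Continuous fun s => fderiv ℝ (f · s) x :=
    Continuous.fderiv_one (f := fun s x => f x s) (hf.comp (contDiff_snd.prodMk contDiff_fst))
      continuous_const
  refine (hasFDerivAt_intervalIntegral_of_contDiff hf a b x).hasDerivAt.congr_deriv ?_
  rw [ContinuousLinearMap.intervalIntegral_apply (hf'.intervalIntegrable a b)]
  simp only [fderiv_apply_one_eq_deriv]

theorem contDiff_partialDeriv {f : E → ℝ → F} (hf : ContDiff ℝ ∞ ↿f) :
    ContDiff ℝ ∞ ↿fun x s => deriv (f x) s := by
  simp only [Function.HasUncurry.uncurry, id, ← fderiv_apply_one_eq_deriv]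
  exact ContDiff.fderiv_apply (f := fun (p : E × ℝ) => f p.1)
    (hf.comp ((contDiff_fst.comp contDiff_fst).prodMk contDiff_snd)) contDiff_snd
    contDiff_const (by simp)

end Parametric

-- `E` and `F` share a universe because the induction replaces `F` by `E →L[ℝ] F`.
theorem contDiff_intervalIntegral.{u} {E F : Type u} [NormedAddCommGroup E] [NormedSpace ℝ E]
    [NormedAddCommGroup F] [NormedSpace ℝ F] {f : E → ℝ → F} (hf : ContDiff ℝ ∞ ↿f) (a b : ℝ) :
    ContDiff ℝ ∞ fun x => ∫ s in a..b, f x s := by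
  refine contDiff_infty.mpr fun n => ?_
  induction n generalizing F with
  | zero =>
    refine contDiff_zero.mpr (continuous_iff_continuousAt.mpr fun x => ?_)
    exact (hasFDerivAt_intervalIntegral_of_contDiff (hf.of_le (by simp)) a b x).continuousAt
  | succ n ih =>
    refine contDiff_succ_iff_hasFDerivAt.mpr ⟨_, ih ?_,
      hasFDerivAt_intervalIntegral_of_contDiff (hf.of_le (by simp)) a b⟩
    exact ContDiff.fderiv (f := fun (p : E × ℝ) x => f x p.2)
      (hf.comp (contDiff_snd.prodMk (contDiff_snd.comp contDiff_fst))) contDiff_fst (by simp)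

theorem contDiff_fourierChar {n : WithTop ℕ∞} : ContDiff ℝ n fun x : ℝ => (𝐞 x : ℂ) := by
  simp only [Real.fourierChar_apply]
  exact ((ofRealCLM.contDiff.comp (contDiff_const.mul contDiff_id)).mul contDiff_const).cexp

theorem periodic_deriv {𝕜 F : Type*} [NontriviallyNormedField 𝕜] [NormedAddCommGroup F]
    [NormedSpace 𝕜 F] {f : 𝕜 → F} {c : 𝕜} (hf : Function.Periodic f c) :
    Function.Periodic (deriv f) c := fun x => by
  rw [← deriv_comp_add_const, hf.funext]

theorem intervalIntegral_comp_sub_of_periodic {F : Type*} [NormedAddCommGroup F] [NormedSpace ℝ F]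
    {g : ℝ → F} {T : ℝ} (hg : Function.Periodic g T) (c : ℝ) :
    ∫ z in 0..T, g (z - c) = ∫ z in 0..T, g z := by
  rw [intervalIntegral.integral_comp_sub_right]
  simpa [sub_eq_neg_add] using hg.intervalIntegral_add_eq (-c) 0

theorem fourierChar_intCast (n : ℤ) : 𝐞 (n : ℝ) = 1 := by
  ext
  rw [Real.fourierChar_apply, Circle.coe_one, Complex.exp_eq_one_iff]
  exact ⟨n, by push_cast; ring⟩

/-! ### Fourier coefficients in the second variable -/

/-- The `m`-th Fourier coefficient in `y` of a function `u(x, y)` with period `1` in `y`, as a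
function of the parameter `x`. -/
noncomputable def yFourierCoeff {X : Type*} (m : ℤ) (u : X → ℝ → ℂ) (x : X) : ℂ :=
  ∫ y in (0 : ℝ)..1, 𝐞 (-(m * y)) * u x y

theorem contDiff_fourierChar_mul {E : Type*} [NormedAddCommGroup E] [NormedSpace ℝ E]
    {u : E → ℝ → ℂ} (hu : ContDiff ℝ ∞ ↿u) (m : ℤ) :
    ContDiff ℝ ∞ fun p : E × ℝ => (𝐞 (-(m * p.2)) : ℂ) * u p.1 p.2 :=
  (contDiff_fourierChar.comp (contDiff_const.mul contDiff_snd).neg).mul hu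

theorem contDiff_yFourierCoeff {E : Type} [NormedAddCommGroup E] [NormedSpace ℝ E]
    {u : E → ℝ → ℂ} (hu : ContDiff ℝ ∞ ↿u) (m : ℤ) :
    ContDiff ℝ ∞ (yFourierCoeff m u) :=
  contDiff_intervalIntegral (contDiff_fourierChar_mul hu m) 0 1

theorem deriv_yFourierCoeff {u : ℝ → ℝ → ℂ} (hu : ContDiff ℝ ∞ ↿u) (m : ℤ) :
    deriv (yFourierCoeff m u) = yFourierCoeff m fun x y => deriv (u · y) x := by
  ext x
  have h := hasDerivAt_intervalIntegral_of_contDiff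
    (f := fun x y => (𝐞 (-(m * y)) : ℂ) * u x y)
    ((contDiff_fourierChar_mul hu m).of_le (by simp)) 0 1 x
  simp only [deriv_const_mul_field] at h
  exact h.deriv

theorem norm_yFourierCoeff_le {X : Type*} {u : X → ℝ → ℂ} {x : X} {C : ℝ}
    (hC : ∀ y ∈ Icc (0 : ℝ) 1, ‖u x y‖ ≤ C) (m : ℤ) :
    ‖yFourierCoeff m u x‖ ≤ C := by
  have h := intervalIntegral.norm_integral_le_of_norm_le_const (a := 0) (b := 1) (C := C)
    (f := fun y => (𝐞 (-(m * y)) : ℂ) * u x y) fun y hy => by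
      rw [uIoc_of_le zero_le_one] at hy
      rw [norm_mul, Circle.norm_coe, one_mul]
      exact hC y (Ioc_subset_Icc_self hy)
  rw [sub_zero, abs_one, mul_one] at h
  exact h

theorem yFourierCoeff_deriv {X : Type*} {u : X → ℝ → ℂ} {x : X} (hu : ContDiff ℝ 1 (u x))
    (hper : Function.Periodic (u x) 1) (m : ℤ) :
    yFourierCoeff m (fun x => deriv (u x)) x = 2 * Real.pi * I * m * yFourierCoeff m u x := by
  have hchar : ∀ y : ℝ, HasDerivAt (fun y : ℝ => (𝐞 (-(m * y)) : ℂ))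
      (-(2 * Real.pi * I * m) * 𝐞 (-(m * y))) y := fun y => by
    have hphase : HasDerivAt (fun y : ℝ => -(m * y)) (-m : ℝ) y := by
      simpa using (hasDerivAt_id y).const_mul (-m : ℝ)
    refine ((Real.hasDerivAt_fourierChar _).scomp y hphase).congr_deriv ?_
    rw [real_smul]
    push_cast
    ring
  have hchar_cont : Continuous fun y : ℝ => (𝐞 (-(m * y)) : ℂ) :=
    Real.differentiable_fourierChar.continuous.comp (by fun_prop)
  have hboundary : (𝐞 (-(m * 1)) : ℂ) * u x 1 = 𝐞 (-(m * 0)) * u x 0 := by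
    have h1 := hper 0
    rw [zero_add] at h1
    rw [h1, mul_one, ← Int.cast_neg, fourierChar_intCast, mul_zero, neg_zero,
      AddChar.map_zero_eq_one]
  have hparts := intervalIntegral.integral_mul_deriv_eq_deriv_mul (a := 0) (b := 1)
    (fun y _ => hchar y) (fun y _ => (hu.differentiable one_ne_zero y).hasDerivAt)
    ((continuous_const.mul hchar_cont).intervalIntegrable _ _)
    ((hu.continuous_deriv le_rfl).intervalIntegrable _ _)
  rw [hboundary, sub_self, zero_sub] at hparts
  rw [yFourierCoeff, hparts, yFourierCoeff]
  simp only [mul_assoc, neg_mul, intervalIntegral.integral_neg, neg_neg,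
    intervalIntegral.integral_const_mul]

theorem exists_abs_freq_pow_mul_norm_yFourierCoeff_le {E : Type*} [NormedAddCommGroup E]
    [NormedSpace ℝ E] {u : E → ℝ → ℂ} (hu : ContDiff ℝ ∞ ↿u)
    (hper : ∀ x, Function.Periodic (u x) 1) {K : Set E} (hK : IsCompact K) (p : ℕ) :
    ∃ C, ∀ (m : ℤ), ∀ x ∈ K, |(m : ℝ)| ^ p * ‖yFourierCoeff m u x‖ ≤ C := by
  induction p generalizing u with
  | zero =>
    obtain ⟨C, hC⟩ := (hK.prod isCompact_Icc).exists_bound_of_continuousOn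
      (s := K ×ˢ Icc (0 : ℝ) 1) hu.continuous.continuousOn
    refine ⟨C, fun m x hx => ?_⟩
    rw [pow_zero, one_mul]
    exact norm_yFourierCoeff_le (fun y hy => hC (x, y) ⟨hx, hy⟩) m
  | succ p ih =>
    obtain ⟨C, hC⟩ := ih (contDiff_partialDeriv hu) fun x => periodic_deriv (hper x)
    refine ⟨C, fun m x hx => le_trans ?_ (hC m x hx)⟩
    have hux : ContDiff ℝ 1 (u x) := (hu.comp (contDiff_prodMk_right x)).of_le (by simp)
    rw [yFourierCoeff_deriv hux (hper x), pow_succ, mul_assoc]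
    gcongr
    have hpi : (1 : ℝ) ≤ 2 * Real.pi := by linarith [Real.pi_gt_three]
    calc |(m : ℝ)| * ‖yFourierCoeff m u x‖
        ≤ 2 * Real.pi * (|(m : ℝ)| * ‖yFourierCoeff m u x‖) :=
          le_mul_of_one_le_left (by positivity) hpi
      _ = ‖2 * Real.pi * I * m * yFourierCoeff m u x‖ := by
          simp [abs_of_pos Real.pi_pos, mul_assoc]

/-! ### Quasi-periodic functions on the plane -/

/-- A smooth function `u(x, y)` on the plane with `u(x, y + 1) = u(x, y)` and
`u(x + 1, y) = e^{−2πiny} u(x, y)`, that is, a smooth section of the complex line bundle over the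
torus `ℝ²/ℤ²` with these transition functions. -/
structure IsTorusSection (n : ℤ) (u : ℝ → ℝ → ℂ) : Prop where
  contDiff : ContDiff ℝ ∞ ↿u
  periodic (x : ℝ) : Function.Periodic (u x) 1
  map_add_one (x y : ℝ) : u (x + 1) y = 𝐞 (-(n * y)) * u x y

namespace IsTorusSection

variable {n : ℤ} {u : ℝ → ℝ → ℂ}

theorem deriv_fst (hu : IsTorusSection n u) : IsTorusSection n fun x y => deriv (u · y) x where
  contDiff := (contDiff_partialDeriv (f := fun y x => u x y)
    (hu.contDiff.comp (contDiff_snd.prodMk contDiff_fst))).comp (contDiff_snd.prodMk contDiff_fst)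
  periodic x y := by simp only [hu.periodic _ y]
  map_add_one x y := by
    rw [← deriv_comp_add_const]
    simp only [hu.map_add_one, deriv_const_mul_field]

theorem yFourierCoeff_add_one (hu : IsTorusSection n u) (m : ℤ) (x : ℝ) :
    yFourierCoeff m u (x + 1) = yFourierCoeff (m + n) u x := by
  refine intervalIntegral.integral_congr fun y _ => ?_
  simp only [hu.map_add_one, ← mul_assoc, ← Circle.coe_mul, ← AddChar.map_add_eq_mul]
  congr 4
  push_cast
  ring

theorem yFourierCoeff_add_intCast (hu : IsTorusSection n u) (m : ℤ) (x : ℝ) (l : ℤ) :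
    yFourierCoeff m u (x + l) = yFourierCoeff (m + l * n) u x := by
  have hperiodic : Function.Periodic (fun j : ℤ => yFourierCoeff (m + l * n - j * n) u (x + j)) 1 :=
    fun j => by
      simp only [Int.cast_add, Int.cast_one, ← add_assoc, hu.yFourierCoeff_add_one]
      congr 1
      ring
  simpa using hperiodic.int_mul_eq l

theorem exists_abs_pow_mul_norm_yFourierCoeff_le (hu : IsTorusSection n u) (hn : n ≠ 0) (m : ℤ)
    (p : ℕ) : ∃ C, ∀ x, |x| ^ p * ‖yFourierCoeff m u x‖ ≤ C := by
  obtain ⟨A, hA⟩ := exists_abs_freq_pow_mul_norm_yFourierCoeff_le hu.contDiff hu.periodic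
    isCompact_Icc (K := Icc (0 : ℝ) 1) p
  obtain ⟨B, hB⟩ := exists_abs_freq_pow_mul_norm_yFourierCoeff_le hu.contDiff hu.periodic
    isCompact_Icc (K := Icc (0 : ℝ) 1) 0
  refine ⟨2 ^ (p - 1) * (A + (|(m : ℝ)| + 1) ^ p * B), fun x => ?_⟩
  set M : ℤ := m + ⌊x⌋ * n with hM
  set c := ‖yFourierCoeff m u x‖ with hc
  have hfract : Int.fract x ∈ Icc (0 : ℝ) 1 := ⟨Int.fract_nonneg x, (Int.fract_lt_one x).le⟩
  have hshift : c = ‖yFourierCoeff M u (Int.fract x)‖ := by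
    rw [hc, ← hu.yFourierCoeff_add_intCast, Int.fract_add_floor]
  have hx : |x| ≤ |(M : ℝ)| + (|(m : ℝ)| + 1) := by
    have hn1 : (1 : ℝ) ≤ |(n : ℝ)| := by exact_mod_cast Int.one_le_abs hn
    calc |x| = |(⌊x⌋ : ℝ) + Int.fract x| := by rw [Int.floor_add_fract]
      _ ≤ |(⌊x⌋ : ℝ)| + |Int.fract x| := abs_add_le _ _
      _ ≤ |(⌊x⌋ : ℝ)| * |(n : ℝ)| + 1 := by
          rw [abs_of_nonneg hfract.1]
          gcongr
          exacts [le_mul_of_one_le_right (abs_nonneg _) hn1, hfract.2]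
      _ = |(M : ℝ) - m| + 1 := by rw [hM, ← abs_mul]; push_cast; ring_nf
      _ ≤ |(M : ℝ)| + (|(m : ℝ)| + 1) := by linarith [abs_sub (M : ℝ) m]
  calc |x| ^ p * c
      ≤ 2 ^ (p - 1) * (|(M : ℝ)| ^ p + (|(m : ℝ)| + 1) ^ p) * c := by
        gcongr
        exact (pow_le_pow_left₀ (abs_nonneg x) hx p).trans
          (add_pow_le (abs_nonneg _) (by positivity) p)
    _ = 2 ^ (p - 1) * (|(M : ℝ)| ^ p * c + (|(m : ℝ)| + 1) ^ p * c) := by ring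
    _ ≤ 2 ^ (p - 1) * (A + (|(m : ℝ)| + 1) ^ p * B) := by
        gcongr
        · exact hshift ▸ hA M _ hfract
        · simpa [hshift] using hB M _ hfract

theorem exists_abs_pow_mul_norm_iteratedDeriv_yFourierCoeff_le (hu : IsTorusSection n u)
    (hn : n ≠ 0) (m : ℤ) (p j : ℕ) :
    ∃ C, ∀ x, |x| ^ p * ‖iteratedDeriv j (yFourierCoeff m u) x‖ ≤ C := by
  induction j generalizing u with
  | zero => simpa using hu.exists_abs_pow_mul_norm_yFourierCoeff_le hn m p
  | succ j ih =>
    rw [iteratedDeriv_succ', deriv_yFourierCoeff hu.contDiff]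
    exact ih hu.deriv_fst

/-- The Fourier coefficients of a section in `y`, as Schwartz functions of `x`. -/
noncomputable def schwartzCoeff (hu : IsTorusSection n u) (hn : n ≠ 0) (m : ℤ) :
    SchwartzMap ℝ ℂ where
  toFun := yFourierCoeff m u
  smooth' := contDiff_yFourierCoeff hu.contDiff m
  decay' p j := by
    simp only [norm_iteratedFDeriv_eq_norm_iteratedDeriv, Real.norm_eq_abs]
    exact hu.exists_abs_pow_mul_norm_iteratedDeriv_yFourierCoeff_le hn m p j

end IsTorusSection

/-! ### Reduction from `KT⁴` to the torus -/

/-- The partial Fourier coefficient of `f(t, x, y, z)` in `(t, z)` of frequency `(k, n)`, as a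
function of `(x, y)`. -/
noncomputable def tzFourierCoeff (k n : ℤ) (f : F4) (x y : ℝ) : ℂ :=
  ∫ t in (0 : ℝ)..1, ∫ z in (0 : ℝ)..1, 𝐞 (-(k * t + n * z)) * f t x y z

theorem Smooth4.contDiff_fourierChar_mul {f : F4} (hf : Smooth4 f) (k n : ℤ) :
    ContDiff ℝ ∞ fun p : ((ℝ × ℝ) × ℝ) × ℝ =>
      (𝐞 (-(k * p.1.2 + n * p.2)) : ℂ) * f p.1.2 p.1.1.1 p.1.1.2 p.2 := by
  refine (contDiff_fourierChar.comp ?_).mul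
    (hf.comp (f := fun p : ((ℝ × ℝ) × ℝ) × ℝ => (p.1.2, p.1.1.1, p.1.1.2, p.2)) ?_) <;> fun_prop

theorem Smooth4.contDiff_integral_fourierChar_mul {f : F4} (hf : Smooth4 f) (k n : ℤ) :
    ContDiff ℝ ∞ fun p : (ℝ × ℝ) × ℝ =>
      ∫ z in (0 : ℝ)..1, 𝐞 (-(k * p.2 + n * z)) * f p.2 p.1.1 p.1.2 z :=
  contDiff_intervalIntegral (hf.contDiff_fourierChar_mul k n) 0 1

theorem Smooth4.contDiff_tzFourierCoeff {f : F4} (hf : Smooth4 f) (k n : ℤ) :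
    ContDiff ℝ ∞ ↿(tzFourierCoeff k n f) :=
  contDiff_intervalIntegral (hf.contDiff_integral_fourierChar_mul k n) 0 1

theorem KTPeriodic.tzFourierCoeff_add_one {f : F4} (hper : KTPeriodic f) (k n : ℤ) (x y : ℝ) :
    tzFourierCoeff k n f (x + 1) y = 𝐞 (-(n * y)) * tzFourierCoeff k n f x y := by
  simp only [tzFourierCoeff, ← intervalIntegral.integral_const_mul]
  refine intervalIntegral.integral_congr fun t _ => ?_
  set g : ℝ → ℂ := fun z => 𝐞 (-(n * y)) * (𝐞 (-(k * t + n * z)) * f t x y z) with hg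
  have hg_periodic : Function.Periodic g 1 := fun z => by
    have hchar : 𝐞 (-(k * t + n * (z + 1))) = 𝐞 (-(k * t + n * z)) := by
      rw [show -(k * t + n * (z + 1)) = -(k * t + n * z) + ((-n : ℤ) : ℝ) by push_cast; ring,
        AddChar.map_add_eq_mul, fourierChar_intCast, mul_one]
    simp only [hg, hchar, (hper t x y z).2.2.2]
  have hshift : ∀ z, (𝐞 (-(k * t + n * z)) : ℂ) * f t (x + 1) y z = g (z - y) := fun z => by
    have hfz : f t (x + 1) y z = f t x y (z - y) := by
      simpa only [sub_add_cancel] using (hper t x y (z - y)).2.1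
    simp only [hg, hfz, ← mul_assoc, ← Circle.coe_mul, ← AddChar.map_add_eq_mul]
    congr 3
    ring
  simp only [hshift]
  exact intervalIntegral_comp_sub_of_periodic hg_periodic y

theorem KTPeriodic.isTorusSection_tzFourierCoeff {f : F4} (hper : KTPeriodic f) (hf : Smooth4 f)
    (k n : ℤ) : IsTorusSection n (tzFourierCoeff k n f) where
  contDiff := hf.contDiff_tzFourierCoeff k n
  periodic x y := by simp only [tzFourierCoeff, (hper _ x y _).2.2.1]
  map_add_one := hper.tzFourierCoeff_add_one k n

theorem Smooth4.yFourierCoeff_tzFourierCoeff {f : F4} (hf : Smooth4 f) (k m n : ℤ) (x : ℝ) :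
    yFourierCoeff m (tzFourierCoeff k n f) x =
      ∫ t in (0 : ℝ)..1, ∫ y in (0 : ℝ)..1, ∫ z in (0 : ℝ)..1,
        f t x y z * 𝐞 (-(k * t + m * y + n * z)) := by
  have hcont : Continuous fun p : ℝ × ℝ => (𝐞 (-(m * p.1)) : ℂ) *
      ∫ z in (0 : ℝ)..1, 𝐞 (-(k * p.2 + n * z)) * f p.2 x p.1 z :=
    (Real.differentiable_fourierChar.continuous.comp (by fun_prop)).mul
      ((hf.contDiff_integral_fourierChar_mul k n).continuous.comp
        (f := fun p : ℝ × ℝ => ((x, p.1), p.2)) (by fun_prop))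
  simp only [yFourierCoeff, tzFourierCoeff, ← intervalIntegral.integral_const_mul]
  rw [intervalIntegral_intervalIntegral_swap]
  · have hmul : ∀ t y z : ℝ, (𝐞 (-(m * y)) : ℂ) * (𝐞 (-(k * t + n * z)) * f t x y z) =
        f t x y z * 𝐞 (-(k * t + m * y + n * z)) := fun t y z => by
      rw [← mul_assoc, ← Circle.coe_mul, ← AddChar.map_add_eq_mul, mul_comm]
      ring_nf
    simp only [hmul]
  · simp only [intervalIntegral.integral_const_mul]
    exact (hcont.continuousOn.integrableOn_compact (isCompact_uIcc.prod isCompact_uIcc)).mono_set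
      (prod_mono uIoc_subset_uIcc uIoc_subset_uIcc)

/-- for a smooth KT-periodic `f` and integers `k, m, n` with `n ≠ 0`, the
partial Fourier coefficient
`f_{k,m,n}(x) = ∫₀¹∫₀¹∫₀¹ f(t,x,y,z)·e^{−2πi(kt+my+nz)} dt dy dz` is a Schwartz function. -/
theorem partial_fourier_coefficient_schwartz
    (f : F4) (hf : Smooth4 f) (hper : KTPeriodic f) (k m n : ℤ) (hn : n ≠ 0) :
    ∃ φ : SchwartzMap ℝ ℂ, ∀ x : ℝ,
      φ x = ∫ t in (0:ℝ)..1, ∫ y in (0:ℝ)..1, ∫ z in (0:ℝ)..1,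
        f t x y z *
          Complex.exp (-(2 * (Real.pi : ℂ) * Complex.I) *
            ((k : ℂ) * (t : ℂ) + (m : ℂ) * (y : ℂ) + (n : ℂ) * (z : ℂ))) := by
  refine ⟨(hper.isTorusSection_tzFourierCoeff hf k n).schwartzCoeff hn m, fun x => ?_⟩
  have hchar : ∀ t y z : ℝ, Complex.exp (-(2 * (Real.pi : ℂ) * Complex.I) *
      ((k : ℂ) * t + (m : ℂ) * y + (n : ℂ) * z)) = 𝐞 (-(k * t + m * y + n * z)) := fun t y z => by
    rw [Real.fourierChar_apply]
    push_cast
    ring_nf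
  simp only [hchar]
  exact hf.yFourierCoeff_tzFourierCoeff k m n x
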